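/- arXiv:2506.03215 — 2 statements merged into one kernel-verified Lean document; each statement's English description precedes it below -/
import Mathlib

section
/- Let S be a subset of M containing infinitely many ideals. Suppose there exist a constant β with 0 < β ≤ 1, a function y = y(x) with 1 < y(x) < x^β, and real constants λ_p for each prime ideal p (with e_p(x) defined by the density relations) such that: (a) for each m ∈ S(x), the number of prime ideals p with N(p) > x^β and p | m is O_β(1); (b) Σ_{y < N(p) ≤ x^β} λ_p = o((log log x)^{1/2}); (c) Σ_{y < N(p) ≤ x^β} |e_p(x)| = o((log log x)^{1/2}). Then the following two assertions are equivalent: (i) for every γ ∈ ℝ, lim_{x → ∞} (1/|S(x)|) · |{m ∈ S(x) : (ω(m) − log log x)/√(log log x) ≤ γ}| = Φ(γ); (ii) for every γ ∈ ℝ, lim_{x → ∞} (1/|S(x)|) · |{m ∈ S(x) : (ω_{y(x)}(m) − log log x)/√(log log x) ≤ γ}| = Φ(γ). -/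
open Filter MeasureTheory Topology
open scoped BigOperators

noncomputable section

variable (K : Type) [Field K] [NumberField K]

/-- The standard Gaussian distribution function Φ. -/
def gaussPhi (γ : ℝ) : ℝ :=
  (Real.sqrt (2 * Real.pi))⁻¹ * ∫ u in Set.Iic γ, Real.exp (-u ^ 2 / 2)

/-- Number of distinct prime ideal divisors of an ideal. -/
def omegaI (m : Ideal (NumberField.RingOfIntegers K)) : ℕ :=
  Nat.card {p : Ideal (NumberField.RingOfIntegers K) // p.IsPrime ∧ p ∣ m}

/-- Number of distinct prime ideal divisors of `m` with norm at most `y`. -/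
def omegaLe (y : ℝ) (m : Ideal (NumberField.RingOfIntegers K)) : ℕ :=
  Nat.card {p : Ideal (NumberField.RingOfIntegers K) //
    p.IsPrime ∧ (Ideal.absNorm p : ℝ) ≤ y ∧ p ∣ m}

/-- The number of elements of `S` with norm at most `x`. -/
def countS (S : Set (Ideal (NumberField.RingOfIntegers K))) (x : ℝ) : ℕ :=
  Nat.card {m : Ideal (NumberField.RingOfIntegers K) //
    m ∈ S ∧ (Ideal.absNorm m : ℝ) ≤ x}


theorem gaussPhi_continuous : Continuous gaussPhi := by
  have hint : Integrable (fun u : ℝ => Real.exp (-u ^ 2 / 2)) := by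
    have h := integrable_exp_neg_mul_sq (b := (1 / 2 : ℝ)) (by norm_num)
    refine h.congr (Filter.Eventually.of_forall fun u => ?_)
    simp only
    congr 1
    ring
  have h2 : gaussPhi = fun γ => (Real.sqrt (2 * Real.pi))⁻¹ *
      ((∫ u in (0 : ℝ)..γ, Real.exp (-u ^ 2 / 2)) +
        ∫ u in Set.Iic (0 : ℝ), Real.exp (-u ^ 2 / 2)) := by
    funext γ
    unfold gaussPhi
    rw [← intervalIntegral.integral_Iic_sub_Iic hint.integrableOn hint.integrableOn]
    ring
  rw [h2]
  have h3 : Continuous fun γ : ℝ => ∫ u in (0 : ℝ)..γ, Real.exp (-u ^ 2 / 2) :=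
    intervalIntegral.continuous_primitive (fun a b => hint.intervalIntegrable) 0
  fun_prop

theorem sandwich_iff (F G : ℝ → ℝ → ℝ) (r : ℝ → ℝ → ℝ) (Φ : ℝ → ℝ) (hΦ : Continuous Φ)
    (hFG : ∀ γ, ∀ᶠ x in atTop, F γ x ≤ G γ x)
    (hGF : ∀ γ δ, 0 < δ → ∀ᶠ x in atTop, G γ x ≤ F (γ + δ) x + r δ x)
    (hr : ∀ δ, 0 < δ → Tendsto (r δ) atTop (𝓝 0)) :
    (∀ γ, Tendsto (F γ) atTop (𝓝 (Φ γ))) ↔ (∀ γ, Tendsto (G γ) atTop (𝓝 (Φ γ))) := by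
  constructor
  · intro h γ
    rw [tendsto_order]
    constructor
    · intro a ha
      filter_upwards [(tendsto_order.1 (h γ)).1 a ha, hFG γ] with x h1 h2
      exact h1.trans_le h2
    · intro b hb
      obtain ⟨δ, hδ, hδb⟩ : ∃ δ : ℝ, 0 < δ ∧ Φ (γ + δ) < b := by
        have h1 : Tendsto (fun δ : ℝ => Φ (γ + δ)) (𝓝[>] 0) (𝓝 (Φ γ)) := by
          have : Continuous fun δ : ℝ => Φ (γ + δ) := by fun_prop
          simpa using (this.tendsto 0).mono_left nhdsWithin_le_nhds
        have h2 := (tendsto_order.1 h1).2 b hb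
        obtain ⟨δ, h3, h4⟩ := (h2.and self_mem_nhdsWithin).exists
        exact ⟨δ, h4, h3⟩
      have h1 := (h (γ + δ)).add (hr δ hδ)
      rw [add_zero] at h1
      filter_upwards [(tendsto_order.1 h1).2 b hδb, hGF γ δ hδ] with x h1 h2
      exact h2.trans_lt h1
  · intro h γ
    rw [tendsto_order]
    constructor
    · intro a ha
      obtain ⟨δ, hδ, hδb⟩ : ∃ δ : ℝ, 0 < δ ∧ a < Φ (γ - δ) := by
        have h1 : Tendsto (fun δ : ℝ => Φ (γ - δ)) (𝓝[>] 0) (𝓝 (Φ γ)) := by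
          have : Continuous fun δ : ℝ => Φ (γ - δ) := by fun_prop
          simpa using (this.tendsto 0).mono_left nhdsWithin_le_nhds
        have h2 := (tendsto_order.1 h1).1 a ha
        obtain ⟨δ, h3, h4⟩ := (h2.and self_mem_nhdsWithin).exists
        exact ⟨δ, h4, h3⟩
      have h1 := (h (γ - δ)).sub (hr δ hδ)
      rw [sub_zero] at h1
      filter_upwards [(tendsto_order.1 h1).1 a hδb, hGF (γ - δ) δ hδ] with x h1 h2
      rw [sub_add_cancel] at h2
      linarith
    · intro b hb
      filter_upwards [(tendsto_order.1 (h γ)).2 b hb, hFG γ] with x h1 h2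
      exact h2.trans_lt h1

theorem normLe_finite (x : ℝ) :
    {m : Ideal (NumberField.RingOfIntegers K) | (Ideal.absNorm m : ℝ) ≤ x}.Finite := by
  refine (Ideal.finite_setOf_absNorm_le (S := NumberField.RingOfIntegers K) ⌊x⌋₊).subset ?_
  intro m hm
  exact Nat.le_floor hm

theorem dvd_finite (m : Ideal (NumberField.RingOfIntegers K)) (hm : m ≠ 0) :
    {p : Ideal (NumberField.RingOfIntegers K) | p ∣ m}.Finite := by
  refine (normLe_finite K (Ideal.absNorm m : ℝ)).subset ?_
  intro p hp
  have h0 : Ideal.absNorm m ≠ 0 := by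
    rw [Ne, Ideal.absNorm_eq_zero_iff]
    exact hm
  have : Ideal.absNorm p ≤ Ideal.absNorm m :=
    Nat.le_of_dvd (Nat.pos_of_ne_zero h0) (map_dvd Ideal.absNorm hp)
  show (Ideal.absNorm p : ℝ) ≤ _
  exact_mod_cast this

open Classical in
theorem card_sub_eq {α : Type*} (P : α → Prop) (T : Finset α) (h : ∀ a, P a ↔ a ∈ T) :
    Nat.card {a // P a} = T.card := by
  rw [Nat.card_congr (Equiv.subtypeEquivRight h)]
  simp

open Classical in
/-- `ω = ω_y + (middle part) + (large part)`. -/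
theorem omega_split (m : Ideal (NumberField.RingOfIntegers K)) (hm : m ≠ 0)
    (y z : ℝ) (hyz : y < z) :
    omegaI K m = omegaLe K y m +
      Nat.card {p : Ideal (NumberField.RingOfIntegers K) //
        p.IsPrime ∧ (y < (Ideal.absNorm p : ℝ) ∧ (Ideal.absNorm p : ℝ) ≤ z) ∧ p ∣ m} +
      Nat.card {p : Ideal (NumberField.RingOfIntegers K) //
        p.IsPrime ∧ z < (Ideal.absNorm p : ℝ) ∧ p ∣ m} := by
  set D := (dvd_finite K m hm).toFinset with hD
  unfold omegaI omegaLe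
  rw [card_sub_eq _ (D.filter fun p => p.IsPrime) (by simp [hD, and_comm]),
    card_sub_eq _ (D.filter fun p => p.IsPrime ∧ (Ideal.absNorm p : ℝ) ≤ y)
      (by intro a; simp [hD]; tauto),
    card_sub_eq _ (D.filter fun p => p.IsPrime ∧ (y < (Ideal.absNorm p : ℝ) ∧
      (Ideal.absNorm p : ℝ) ≤ z)) (by intro a; simp [hD]; tauto),
    card_sub_eq _ (D.filter fun p => p.IsPrime ∧ z < (Ideal.absNorm p : ℝ))
      (by intro a; simp [hD]; tauto)]
  rw [← Finset.card_union_of_disjoint, ← Finset.card_union_of_disjoint]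
  · congr 1
    ext p
    simp only [Finset.mem_union, Finset.mem_filter]
    have h1 := le_or_gt (Ideal.absNorm p : ℝ) y
    have h2 := le_or_gt (Ideal.absNorm p : ℝ) z
    tauto
  · rw [Finset.disjoint_left]
    intro p hp hq
    simp only [Finset.mem_union, Finset.mem_filter] at hp hq
    rcases hp with hp | hp <;> linarith [hp.2.2, hq.2.2, hp.2.2]
  · rw [Finset.disjoint_left]
    intro p hp hq
    simp only [Finset.mem_filter] at hp hq
    linarith [hp.2.2, hq.2.2.1]

/-- Under conditions (a)–(c), the Gaussian limit law for
`(ω(m) - log log x)/√(log log x)` on `S` is equivalent to the Gaussian limit law for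
the truncated function `(ω_{y(x)}(m) - log log x)/√(log log x)`. -/
theorem gaussian_omega_iff_gaussian_omega_truncated
    (S : Set (Ideal (NumberField.RingOfIntegers K)))
    (hS0 : 0 ∉ S) (hSinf : S.Infinite)
    (β : ℝ) (hβ0 : 0 < β) (hβ1 : β ≤ 1)
    (y : ℝ → ℝ) (hy : ∀ x : ℝ, 1 < x → 1 < y x ∧ y x < x ^ β)
    (lam : Ideal (NumberField.RingOfIntegers K) → ℝ)
    (e : Ideal (NumberField.RingOfIntegers K) → ℝ → ℝ)
    (hdensity : ∀ p : Ideal (NumberField.RingOfIntegers K), p.IsPrime → ∀ x : ℝ,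
      (Nat.card {m : Ideal (NumberField.RingOfIntegers K) //
          m ∈ S ∧ (Ideal.absNorm m : ℝ) ≤ x ∧ p ∣ m} : ℝ) /
        (countS K S x : ℝ) = lam p + e p x)
    -- condition (a)
    (ha : ∃ C : ℝ, ∀ x : ℝ, 1 < x → ∀ m ∈ S, (Ideal.absNorm m : ℝ) ≤ x →
      (Nat.card {p : Ideal (NumberField.RingOfIntegers K) //
        p.IsPrime ∧ x ^ β < (Ideal.absNorm p : ℝ) ∧ p ∣ m} : ℝ) ≤ C)
    -- condition (b)
    (hb : (fun x : ℝ => ∑' p : {p : Ideal (NumberField.RingOfIntegers K) //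
        p.IsPrime ∧ y x < (Ideal.absNorm p : ℝ) ∧ (Ideal.absNorm p : ℝ) ≤ x ^ β}, lam p.1)
      =o[atTop] fun x : ℝ => Real.sqrt (Real.log (Real.log x)))
    -- condition (c)
    (hc : (fun x : ℝ => ∑' p : {p : Ideal (NumberField.RingOfIntegers K) //
        p.IsPrime ∧ y x < (Ideal.absNorm p : ℝ) ∧ (Ideal.absNorm p : ℝ) ≤ x ^ β}, |e p.1 x|)
      =o[atTop] fun x : ℝ => Real.sqrt (Real.log (Real.log x))) :
    (∀ γ : ℝ, Tendsto (fun x : ℝ =>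
        (Nat.card {m : Ideal (NumberField.RingOfIntegers K) //
            m ∈ S ∧ (Ideal.absNorm m : ℝ) ≤ x ∧
            ((omegaI K m : ℝ) - Real.log (Real.log x)) /
              Real.sqrt (Real.log (Real.log x)) ≤ γ} : ℝ) /
          (countS K S x : ℝ)) atTop (𝓝 (gaussPhi γ))) ↔
    (∀ γ : ℝ, Tendsto (fun x : ℝ =>
        (Nat.card {m : Ideal (NumberField.RingOfIntegers K) //
            m ∈ S ∧ (Ideal.absNorm m : ℝ) ≤ x ∧
            ((omegaLe K (y x) m : ℝ) - Real.log (Real.log x)) /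
              Real.sqrt (Real.log (Real.log x)) ≤ γ} : ℝ) /
          (countS K S x : ℝ)) atTop (𝓝 (gaussPhi γ))) := by
  classical
  obtain ⟨C, hC⟩ := ha
  set s : ℝ → ℝ := fun x => Real.sqrt (Real.log (Real.log x)) with hs
  have hs_top : Tendsto s atTop atTop :=
    Real.tendsto_sqrt_atTop.comp (Real.tendsto_log_atTop.comp Real.tendsto_log_atTop)
  set L : ℝ → ℝ := fun x => ∑' p : {p : Ideal (NumberField.RingOfIntegers K) //
        p.IsPrime ∧ y x < (Ideal.absNorm p : ℝ) ∧ (Ideal.absNorm p : ℝ) ≤ x ^ β}, lam p.1 with hL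
  set E : ℝ → ℝ := fun x => ∑' p : {p : Ideal (NumberField.RingOfIntegers K) //
        p.IsPrime ∧ y x < (Ideal.absNorm p : ℝ) ∧ (Ideal.absNorm p : ℝ) ≤ x ^ β}, |e p.1 x| with hE
  have hTfin : ∀ x : ℝ, {m | m ∈ S ∧ (Ideal.absNorm m : ℝ) ≤ x}.Finite := fun x =>
    (normLe_finite K x).subset fun m hm => hm.2
  set T : ℝ → Finset (Ideal (NumberField.RingOfIntegers K)) := fun x => (hTfin x).toFinset with hT
  have memT : ∀ x m, m ∈ T x ↔ m ∈ S ∧ (Ideal.absNorm m : ℝ) ≤ x := by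
    intro x m; simp [hT]
  have hcount : ∀ x, countS K S x = (T x).card := fun x =>
    card_sub_eq _ _ fun m => (memT x m).symm
  have hcard : ∀ (x : ℝ) (P : Ideal (NumberField.RingOfIntegers K) → Prop),
      Nat.card {m : Ideal (NumberField.RingOfIntegers K) //
          m ∈ S ∧ (Ideal.absNorm m : ℝ) ≤ x ∧ P m} = ((T x).filter P).card := by
    intro x P
    refine card_sub_eq _ _ fun m => ?_
    rw [Finset.mem_filter, memT, and_assoc]
  -- the counting set is eventually nonempty
  have hpos : ∀ᶠ x in atTop, (0 : ℝ) < (T x).card := by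
    obtain ⟨m, hm⟩ := hSinf.nonempty
    filter_upwards [eventually_ge_atTop (Ideal.absNorm m : ℝ)] with x hx
    have : m ∈ T x := (memT x m).2 ⟨hm, hx⟩
    exact_mod_cast Finset.card_pos.2 ⟨m, this⟩
  -- the middle prime sets
  have hPfin : ∀ x : ℝ, {p : Ideal (NumberField.RingOfIntegers K) |
      p.IsPrime ∧ y x < (Ideal.absNorm p : ℝ) ∧ (Ideal.absNorm p : ℝ) ≤ x ^ β}.Finite := fun x =>
    (normLe_finite K (x ^ β)).subset fun m hm => hm.2.2
  set P : ℝ → Finset (Ideal (NumberField.RingOfIntegers K)) := fun x => (hPfin x).toFinset with hP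
  have memP : ∀ x p, p ∈ P x ↔
      p.IsPrime ∧ y x < (Ideal.absNorm p : ℝ) ∧ (Ideal.absNorm p : ℝ) ≤ x ^ β := by
    intro x m; simp [hP]
  have htsum : ∀ (x : ℝ) (f : Ideal (NumberField.RingOfIntegers K) → ℝ),
      ∑' p : {p : Ideal (NumberField.RingOfIntegers K) //
        p.IsPrime ∧ y x < (Ideal.absNorm p : ℝ) ∧ (Ideal.absNorm p : ℝ) ≤ x ^ β}, f p.1
      = ∑ p ∈ P x, f p := by
    intro x f
    rw [← Finset.tsum_subtype (P x) f]
    exact (Equiv.subtypeEquivRight fun p => (memP x p).symm).tsum_eq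
      (fun p : {p // p ∈ P x} => f p.1)
  have hLsum : ∀ x, L x = ∑ p ∈ P x, lam p := fun x => htsum x lam
  have hEsum : ∀ x, E x = ∑ p ∈ P x, |e p x| := fun x => htsum x fun p => |e p x|
  set mid : ℝ → Ideal (NumberField.RingOfIntegers K) → ℕ := fun x m =>
    ((P x).filter fun p => p ∣ m).card with hmid
  -- average of the middle part
  have hmidsum : ∀ x, (0 : ℝ) < (T x).card →
      ∑ m ∈ T x, (mid x m : ℝ) ≤ (T x).card * (L x + E x) := by
    intro x hx
    have h1 : ∑ m ∈ T x, (mid x m : ℝ) =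
        ∑ p ∈ P x, (((T x).filter fun m => p ∣ m).card : ℝ) := by
      simp only [hmid, Finset.card_filter, Nat.cast_sum]
      rw [Finset.sum_comm]
    rw [h1, hLsum, hEsum, ← Finset.sum_add_distrib, Finset.mul_sum]
    refine Finset.sum_le_sum fun p hp => ?_
    have h2 := hdensity p ((memP x p).1 hp).1 x
    rw [hcard x (fun m => p ∣ m), hcount, div_eq_iff hx.ne'] at h2
    rw [h2, mul_comm]
    gcongr
    exact le_abs_self _
  -- decomposition
  have hdec : ∀ x, 1 < x → ∀ m ∈ T x,
      (omegaLe K (y x) m : ℝ) ≤ omegaI K m ∧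
      (omegaI K m : ℝ) - omegaLe K (y x) m ≤ mid x m + C := by
    intro x hx m hm
    obtain ⟨hmS, hmx⟩ := (memT x m).1 hm
    have hm0 : m ≠ 0 := fun h => hS0 (h ▸ hmS)
    have h1 := omega_split K m hm0 (y x) (x ^ β) (hy x hx).2
    have h2 := hC x hx m hmS hmx
    have h3 : Nat.card {p : Ideal (NumberField.RingOfIntegers K) //
        p.IsPrime ∧ (y x < (Ideal.absNorm p : ℝ) ∧ (Ideal.absNorm p : ℝ) ≤ x ^ β) ∧ p ∣ m}
        = mid x m := by
      refine card_sub_eq _ _ fun p => ?_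
      rw [Finset.mem_filter, memP]
      tauto
    rw [h3] at h1
    have h4 : (omegaI K m : ℝ) = omegaLe K (y x) m + mid x m +
      (Nat.card {p : Ideal (NumberField.RingOfIntegers K) //
        p.IsPrime ∧ x ^ β < (Ideal.absNorm p : ℝ) ∧ p ∣ m} : ℝ) := by exact_mod_cast h1
    refine ⟨?_, by linarith⟩
    rw [h1]
    push_cast
    have : (0 : ℝ) ≤ (Nat.card {p : Ideal (NumberField.RingOfIntegers K) //
        p.IsPrime ∧ x ^ β < (Ideal.absNorm p : ℝ) ∧ p ∣ m} : ℝ) := Nat.cast_nonneg _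
    have : (0 : ℝ) ≤ (mid x m : ℝ) := Nat.cast_nonneg _
    linarith
  refine sandwich_iff _ _ (fun δ x => (L x + E x + C) / s x / δ) gaussPhi gaussPhi_continuous
    ?_ ?_ ?_
  · intro γ
    filter_upwards [eventually_gt_atTop 1, hs_top.eventually_gt_atTop 0] with x hx hsx
    rw [hcard x (fun m => ((omegaI K m : ℝ) - Real.log (Real.log x)) / s x ≤ γ),
      hcard x (fun m => ((omegaLe K (y x) m : ℝ) - Real.log (Real.log x)) / s x ≤ γ)]
    refine div_le_div_of_nonneg_right ?_ (Nat.cast_nonneg _)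
    refine Nat.cast_le.2 (Finset.card_le_card ?_)
    intro m hm
    rw [Finset.mem_filter] at hm ⊢
    refine ⟨hm.1, le_trans ?_ hm.2⟩
    have := (hdec x hx m hm.1).1
    gcongr
  · intro γ δ hδ
    filter_upwards [eventually_gt_atTop 1, hs_top.eventually_gt_atTop 0, hpos] with x hx hsx hTx
    rw [hcard x (fun m => ((omegaI K m : ℝ) - Real.log (Real.log x)) / s x ≤ γ + δ),
      hcard x (fun m => ((omegaLe K (y x) m : ℝ) - Real.log (Real.log x)) / s x ≤ γ), hcount]
    set B := (T x).filter fun m => δ * s x < (omegaI K m : ℝ) - omegaLe K (y x) m with hB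
    have hsub : ((T x).filter
        fun m => ((omegaLe K (y x) m : ℝ) - Real.log (Real.log x)) / s x ≤ γ) ⊆
        ((T x).filter fun m => ((omegaI K m : ℝ) - Real.log (Real.log x)) / s x ≤ γ + δ) ∪ B := by
      intro m hm
      simp only [hB, Finset.mem_union, Finset.mem_filter] at hm ⊢
      by_cases h : δ * s x < (omegaI K m : ℝ) - omegaLe K (y x) m
      · exact Or.inr ⟨hm.1, h⟩
      · refine Or.inl ⟨hm.1, ?_⟩
        have h2 := hm.2
        rw [div_le_iff₀ hsx] at h2 ⊢
        push Not at h
        linarith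
    have hle := (Finset.card_le_card hsub).trans (Finset.card_union_le _ _)
    have hBle : (B.card : ℝ) * (δ * s x) ≤ (T x).card * (L x + E x + C) := by
      calc (B.card : ℝ) * (δ * s x) = ∑ m ∈ B, δ * s x := by simp
        _ ≤ ∑ m ∈ B, ((omegaI K m : ℝ) - omegaLe K (y x) m) := by
            refine Finset.sum_le_sum fun m hm => ?_
            exact (Finset.mem_filter.1 hm).2.le
        _ ≤ ∑ m ∈ T x, ((omegaI K m : ℝ) - omegaLe K (y x) m) := by
            refine Finset.sum_le_sum_of_subset_of_nonneg (Finset.filter_subset _ _) ?_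
            intro m hm _
            exact sub_nonneg.2 (hdec x hx m hm).1
        _ ≤ ∑ m ∈ T x, ((mid x m : ℝ) + C) :=
            Finset.sum_le_sum fun m hm => (hdec x hx m hm).2
        _ = ∑ m ∈ T x, (mid x m : ℝ) + (T x).card * C := by
            rw [Finset.sum_add_distrib]; simp
        _ ≤ (T x).card * (L x + E x + C) := by
            have := hmidsum x hTx
            linarith
    have hB2 : (B.card : ℝ) / (T x).card ≤ (L x + E x + C) / s x / δ := by
      rw [div_div, div_le_div_iff₀ hTx (by positivity)]
      linarith
    refine le_trans ?_ (add_le_add_right hB2 _)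
    rw [← add_div]
    refine div_le_div_of_nonneg_right ?_ hTx.le
    exact_mod_cast hle
  · intro δ hδ
    have h1 : Tendsto (fun x => L x / s x) atTop (𝓝 0) := hb.tendsto_div_nhds_zero
    have h2 : Tendsto (fun x => E x / s x) atTop (𝓝 0) := hc.tendsto_div_nhds_zero
    have h3 : Tendsto (fun x => C / s x) atTop (𝓝 0) := tendsto_const_nhds.div_atTop hs_top
    have h4 := (((h1.add h2).add h3).div_const δ)
    simpa [add_div] using h4

end
end

section
/- Let K be a number field. There exists a constant A = A(K) such that for x ≥ 3, Σ_{p prime ideal of O_K, N(p) ≤ x} 1/N(p) = log log x + A + O(1/log x), where the implied constant depends only on K. -/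
open Filter Topology
open scoped BigOperators

noncomputable section

def MSmall {R ι : Type*} [CommRing R] (b : Module.Basis ι ℤ R) (n : ℕ) (x : R) : Prop :=
  ∀ i, |b.repr x i| ≤ (n : ℤ)

def MBox {R ι : Type*} [CommRing R] [Fintype ι] [DecidableEq ι] (b : Module.Basis ι ℤ R) (c : R) (n : ℕ) :
    Finset R :=
  (Fintype.piFinset fun i => Finset.Icc (b.repr c i - n) (b.repr c i + n)).map
    b.equivFun.symm.toEquiv.toEmbedding

theorem mem_MBox {R ι : Type*} [CommRing R] [Fintype ι] [DecidableEq ι] (b : Module.Basis ι ℤ R)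
    (c : R) (n : ℕ) (x : R) : x ∈ MBox b c n ↔ MSmall b n (x - c) := by
  unfold MBox MSmall
  rw [Finset.mem_map_equiv]
  simp only [Fintype.mem_piFinset, Finset.mem_Icc, map_sub, Finsupp.sub_apply, abs_le]
  refine forall_congr' fun i => ?_
  have : (b.equivFun.symm.toEquiv.symm x) i = b.repr x i := rfl
  rw [this]
  constructor <;> rintro ⟨h1, h2⟩ <;> constructor <;> linarith

theorem card_MBox {R ι : Type*} [CommRing R] [Fintype ι] [DecidableEq ι] (b : Module.Basis ι ℤ R)
    (c : R) (n : ℕ) : (MBox b c n).card = (2 * n + 1) ^ Fintype.card ι := by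
  unfold MBox
  rw [Finset.card_map, Fintype.card_piFinset]
  have : ∀ i, (Finset.Icc (b.repr c i - n) (b.repr c i + n)).card = 2 * n + 1 := by
    intro i
    rw [Int.card_Icc]
    omega
  simp [this]

theorem MSmall.add {R ι : Type*} [CommRing R] {b : Module.Basis ι ℤ R} {m n : ℕ} {x y : R}
    (hx : MSmall b m x) (hy : MSmall b n y) : MSmall b (m + n) (x + y) := by
  intro i
  rw [map_add, Finsupp.add_apply]
  push_cast
  exact (abs_add_le _ _).trans (add_le_add (hx i) (hy i))

theorem MSmall.neg {R ι : Type*} [CommRing R] {b : Module.Basis ι ℤ R} {m : ℕ} {x : R}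
    (hx : MSmall b m x) : MSmall b m (-x) := by
  intro i
  rw [map_neg, Finsupp.neg_apply, abs_neg]
  exact hx i

theorem exists_mul_bound {R ι : Type*} [CommRing R] [Fintype ι] (b : Module.Basis ι ℤ R) :
    ∃ M : ℕ, 1 ≤ M ∧ ∀ (m n : ℕ) (x y : R), MSmall b m x → MSmall b n y → MSmall b (M * m * n) (x * y) := by
  refine ⟨(∑ k, ∑ i, ∑ j, |b.repr (b i * b j) k|).toNat + 1, by omega, fun m n x y hx hy k => ?_⟩
  have hxy : x * y = ∑ i, ∑ j, (b.repr x i * b.repr y j) • (b i * b j) := by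
    conv_lhs => rw [← b.sum_repr x, ← b.sum_repr y]
    rw [Finset.sum_mul_sum]
    refine Finset.sum_congr rfl fun i _ => Finset.sum_congr rfl fun j _ => ?_
    rw [smul_mul_smul_comm]
  have h0 : (0:ℤ) ≤ ∑ k, ∑ i, ∑ j, |b.repr (b i * b j) k| := by positivity
  have h1 : |b.repr (x * y) k| ≤ ∑ i, ∑ j, (m * n : ℤ) * |b.repr (b i * b j) k| := by
    rw [hxy]
    simp only [map_sum, map_smul, Finsupp.coe_finsetSum, Finset.sum_apply, Finsupp.smul_apply, smul_eq_mul]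
    refine (Finset.abs_sum_le_sum_abs _ _).trans (Finset.sum_le_sum fun i _ => ?_)
    refine (Finset.abs_sum_le_sum_abs _ _).trans (Finset.sum_le_sum fun j _ => ?_)
    rw [abs_mul, abs_mul]
    gcongr
    · exact hx i
    · exact hy j
  have h2 : ∑ i, ∑ j, |b.repr (b i * b j) k| ≤ ∑ k, ∑ i, ∑ j, |b.repr (b i * b j) k| :=
    Finset.single_le_sum (f := fun k => ∑ i, ∑ j, |b.repr (b i * b j) k|)
      (fun _ _ => by positivity) (Finset.mem_univ k)
  simp only [← Finset.mul_sum] at h1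
  push_cast
  rw [Int.toNat_of_nonneg h0]
  have : (0:ℤ) ≤ m * n := by positivity
  nlinarith

theorem exists_short {R ι : Type*} [CommRing R] [IsDedekindDomain R] [Module.Free ℤ R] [Module.Finite ℤ R]
    [Fintype ι] [DecidableEq ι] (b : Module.Basis ι ℤ R) (I : Ideal R) (hI : Ideal.absNorm I ≠ 0) (m : ℕ)
    (hm : Ideal.absNorm I < (m + 1) ^ Fintype.card ι) :
    ∃ v ∈ I, v ≠ 0 ∧ MSmall b m v := by
  classical
  rw [Ideal.absNorm_apply, Submodule.cardQuot_apply] at hI hm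
  have : Finite (R ⧸ I) := Nat.finite_of_card_ne_zero hI
  have := Fintype.ofFinite (R ⧸ I)
  let f : (ι → Fin (m + 1)) → R ⧸ I := fun a =>
    Ideal.Quotient.mk I (b.equivFun.symm fun i => ((a i : ℕ) : ℤ))
  obtain ⟨x, y, hxy, hf⟩ := Fintype.exists_ne_map_eq_of_card_lt f (by
    rw [← Nat.card_eq_fintype_card]; simpa using hm)
  refine ⟨(b.equivFun.symm fun i => ((x i : ℕ) : ℤ)) - (b.equivFun.symm fun i => ((y i : ℕ) : ℤ)),
    Ideal.Quotient.eq.mp hf, ?_, ?_⟩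
  · intro h
    apply hxy
    have := b.equivFun.symm.injective (sub_eq_zero.mp h)
    funext i
    have := congrFun this i
    apply Fin.ext
    exact_mod_cast this
  · intro i
    rw [← map_sub]
    have : b.repr (b.equivFun.symm ((fun i => ((x i : ℕ) : ℤ)) - fun i => ((y i : ℕ) : ℤ))) i
      = ((x i : ℕ) : ℤ) - ((y i : ℕ) : ℤ) := by
      rw [← b.equivFun_apply, LinearEquiv.apply_symm_apply]; rfl
    rw [this, abs_le]
    have := (x i).is_lt
    have := (y i).is_lt
    constructor <;> omega

theorem exists_cover {R ι : Type*} [CommRing R] [IsDedekindDomain R] [CharZero R] [Module.Free ℤ R] [Module.Finite ℤ R]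
    [Fintype ι] [DecidableEq ι] (b : Module.Basis ι ℤ R) :
    ∃ M : ℕ, 1 ≤ M ∧ ∀ (I : Ideal R) (m : ℕ), Ideal.absNorm I ≠ 0 → 
      Ideal.absNorm I < (m + 1) ^ Fintype.card ι → ∀ x : R, ∃ y, x - y ∈ I ∧ MSmall b (M * m) y := by
  obtain ⟨M, hM1, hM⟩ := exists_mul_bound b
  refine ⟨M, hM1, fun I m hI hm x => ?_⟩
  obtain ⟨v, hvI, hv0, hv⟩ := exists_short b I hI m hm
  set N := Ideal.absNorm (Ideal.span {v}) with hN
  have hN0 : 0 < N := by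
    refine Nat.pos_of_ne_zero ?_
    rw [hN, Ne, Ideal.absNorm_eq_zero_iff]
    simpa using hv0
  obtain ⟨w, hw⟩ := Ideal.mem_span_singleton.mp (Ideal.absNorm_mem (Ideal.span {v}))
  rw [← hN] at hw
  let g : R := b.equivFun.symm fun i => b.repr (x * w) i / (N : ℤ)
  let r : R := b.equivFun.symm fun i => b.repr (x * w) i % (N : ℤ)
  have hgr : x * w = N * g + r := by
    apply b.equivFun.injective
    have : (N : R) * g = (N : ℤ) • g := by simp
    rw [map_add, this, map_smul]
    funext i
    simp only [g, r, LinearEquiv.apply_symm_apply, Pi.add_apply, Pi.smul_apply, smul_eq_mul]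
    exact (Int.mul_ediv_add_emod _ _).symm
  have hr : MSmall b N r := by
    intro i
    have : b.repr r i = b.repr (x * w) i % (N : ℤ) := by
      rw [← b.equivFun_apply]; simp only [r, LinearEquiv.apply_symm_apply]
    rw [this, abs_of_nonneg (Int.emod_nonneg _ (by omega))]
    exact (Int.emod_lt_of_pos _ (by omega)).le
  refine ⟨x - v * g, by simpa using I.mul_mem_right g hvI, fun i => ?_⟩
  have h1 : (N : ℤ) • (x - v * g) = v * r := by
    have : (N : ℤ) • (x - v * g) = (N : R) * (x - v * g) := by simp
    rw [this]
    linear_combination x * hw + v * hgr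
  have h2 := hM _ _ _ _ hv hr i
  rw [← h1, map_smul, Finsupp.smul_apply, smul_eq_mul, abs_mul] at h2
  push_cast at h2 ⊢
  rw [abs_of_pos (by exact_mod_cast hN0 : (0:ℤ) < N)] at h2
  have : (0:ℤ) < N := by exact_mod_cast hN0
  nlinarith

open Classical in
theorem tile_upper {R ι : Type*} [CommRing R] [IsDedekindDomain R] [Module.Free ℤ R] [Module.Finite ℤ R]
    [Fintype ι] (b : Module.Basis ι ℤ R) (I : Ideal R) (hI : Ideal.absNorm I ≠ 0) (r : ℕ)
    (hr : ∀ x : R, ∃ y, x - y ∈ I ∧ MSmall b r y) (c : R) (n : ℕ) :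
    Ideal.absNorm I * ((MBox b c n).filter (· ∈ I)).card ≤ (2 * (n + r) + 1) ^ Fintype.card ι := by
  have hc := Ideal.absNorm_apply I
  rw [Submodule.cardQuot_apply] at hc
  have : Finite (R ⧸ I) := Nat.finite_of_card_ne_zero (hc ▸ hI)
  have := Fintype.ofFinite (R ⧸ I)
  rw [Nat.card_eq_fintype_card] at hc
  choose F hF1 hF2 using hr
  let G : R ⧸ I → R := fun s => F (Quotient.out s)
  have hG : ∀ s, Ideal.Quotient.mk I (G s) = s := by
    intro s
    have := Ideal.Quotient.eq.mpr (hF1 (Quotient.out s))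
    rw [← this]
    exact Quotient.out_eq s
  rw [hc, ← card_MBox b c, ← Finset.card_univ, ← Finset.card_product]
  refine Finset.card_le_card_of_injOn (fun p => p.2 + G p.1) ?_ ?_
  · intro p hp
    simp only [Finset.coe_product, Set.mem_prod, Finset.mem_coe, Finset.mem_filter, mem_MBox] at hp ⊢
    have : p.2 + G p.1 - c = (p.2 - c) + G p.1 := by ring
    rw [this]
    exact hp.2.1.add (hF2 _)
  · rintro ⟨s, x⟩ hp ⟨t, y⟩ hq h
    simp only [Finset.coe_product, Set.mem_prod, Finset.mem_coe, Finset.mem_filter] at hp hq h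
    have h1 := congrArg (Ideal.Quotient.mk I) h
    simp only [map_add, hG, Ideal.Quotient.eq_zero_iff_mem.mpr hp.2.2,
      Ideal.Quotient.eq_zero_iff_mem.mpr hq.2.2, zero_add] at h1
    subst h1
    simpa using h

open Classical in
theorem tile_lower {R ι : Type*} [CommRing R] [IsDedekindDomain R] [Module.Free ℤ R] [Module.Finite ℤ R]
    [Fintype ι] (b : Module.Basis ι ℤ R) (I : Ideal R) (hI : Ideal.absNorm I ≠ 0) (r : ℕ)
    (hr : ∀ x : R, ∃ y, x - y ∈ I ∧ MSmall b r y) (c : R) (n : ℕ) :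
    (2 * n + 1) ^ Fintype.card ι ≤ Ideal.absNorm I * ((MBox b c (n + r)).filter (· ∈ I)).card := by
  have hc := Ideal.absNorm_apply I
  rw [Submodule.cardQuot_apply] at hc
  have : Finite (R ⧸ I) := Nat.finite_of_card_ne_zero (hc ▸ hI)
  have := Fintype.ofFinite (R ⧸ I)
  rw [Nat.card_eq_fintype_card] at hc
  choose F hF1 hF2 using hr
  let G : R ⧸ I → R := fun s => F (Quotient.out s)
  have hG : ∀ s, Ideal.Quotient.mk I (G s) = s := by
    intro s
    have := Ideal.Quotient.eq.mpr (hF1 (Quotient.out s))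
    rw [← this]
    exact Quotient.out_eq s
  rw [hc, ← card_MBox b c, ← Finset.card_univ, ← Finset.card_product]
  refine Finset.card_le_card_of_injOn
    (fun x => (Ideal.Quotient.mk I x, x - G (Ideal.Quotient.mk I x))) ?_ ?_
  · intro x hx
    simp only [Finset.coe_product, Set.mem_prod, Finset.mem_coe, Finset.mem_filter, mem_MBox,
      Finset.mem_univ, true_and] at hx ⊢
    constructor
    · have : x - G (Ideal.Quotient.mk I x) - c = (x - c) + -G (Ideal.Quotient.mk I x) := by ring
      rw [this]
      exact hx.add (hF2 _).neg
    · exact Ideal.Quotient.eq.mp (hG _).symm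
  · intro x _ y _ h
    simp only [Prod.mk.injEq] at h
    obtain ⟨h1, h2⟩ := h
    rw [h1] at h2
    simpa using h2

theorem norm_bounds (K : Type) [Field K] [NumberField K] {ι : Type} [Fintype ι] [DecidableEq ι]
    (b : Module.Basis ι ℤ (NumberField.RingOfIntegers K)) :
    ∃ A D : ℕ, 1 ≤ D ∧ ∀ n : ℕ, 1 ≤ n → ∀ α ∈ MBox b ((A * n : ℕ) : NumberField.RingOfIntegers K) n,
      n ^ Fintype.card ι ≤ Ideal.absNorm (Ideal.span {α}) ∧
      Ideal.absNorm (Ideal.span {α}) ≤ (D * n) ^ Fintype.card ι := by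
  set B : ℝ := ∑ σ : K →ₐ[ℚ] ℂ, ∑ i, ‖σ (b i : K)‖ with hB
  have hB0 : 0 ≤ B := by positivity
  have hcard : Fintype.card ι = Fintype.card (K →ₐ[ℚ] ℂ) := by
    rw [AlgHom.card, ← NumberField.RingOfIntegers.rank, Module.finrank_eq_card_basis b]
  refine ⟨⌈B⌉₊ + 1, 2 * ⌈B⌉₊ + 1, by omega, fun n hn α hα => ?_⟩
  rw [mem_MBox] at hα
  have hn0 : (1:ℝ) ≤ n := by exact_mod_cast hn
  have hceil := Nat.le_ceil B
  set c : NumberField.RingOfIntegers K := (((⌈B⌉₊ + 1) * n : ℕ) : NumberField.RingOfIntegers K) with hc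
  have hσc : ∀ σ : K →ₐ[ℚ] ℂ, σ (c : K) = (((⌈B⌉₊ + 1) * n : ℝ) : ℂ) := by
    intro σ
    rw [hc]
    push_cast
    simp
  have hdiff : ∀ σ : K →ₐ[ℚ] ℂ, ‖σ ((α - c : NumberField.RingOfIntegers K) : K)‖ ≤ B * n := by
    intro σ
    have h1 : ((α - c : NumberField.RingOfIntegers K) : K) = ∑ i, (b.repr (α - c) i : K) * (b i : K) := by
      conv_lhs => rw [← b.sum_repr (α - c)]
      simp only [map_sum, zsmul_eq_mul, map_mul, map_intCast]
    rw [h1, map_sum]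
    have h2 : ∑ i, ‖σ (b i : K)‖ ≤ B :=
      Finset.single_le_sum (f := fun σ : K →ₐ[ℚ] ℂ => ∑ i, ‖σ (b i : K)‖)
        (fun _ _ => by positivity) (Finset.mem_univ σ)
    calc ‖∑ i, σ ((b.repr (α - c) i : K) * (b i : K))‖
        ≤ ∑ i, ‖σ ((b.repr (α - c) i : K) * (b i : K))‖ := norm_sum_le _ _
      _ ≤ ∑ i, ‖σ (b i : K)‖ * n := by
          refine Finset.sum_le_sum fun i _ => ?_
          rw [map_mul, norm_mul, mul_comm]
          gcongr
          rw [map_intCast, Complex.norm_intCast]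
          exact_mod_cast hα i
      _ = (∑ i, ‖σ (b i : K)‖) * n := by rw [Finset.sum_mul]
      _ ≤ B * n := by gcongr
  have hσ : ∀ σ : K →ₐ[ℚ] ℂ, (n:ℝ) ≤ ‖σ (α : K)‖ ∧ ‖σ (α : K)‖ ≤ ((2 * ⌈B⌉₊ + 1 : ℕ) : ℝ) * n := by
    intro σ
    have h1 : σ (α : K) = σ (c : K) + σ ((α - c : NumberField.RingOfIntegers K) : K) := by
      rw [← map_add]; congr 1; push_cast; ring
    have h2 : ‖σ (c : K)‖ = (⌈B⌉₊ + 1) * n := by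
      rw [hσc, Complex.norm_real, Real.norm_of_nonneg (by positivity)]
    have h3 := hdiff σ
    have h4 := norm_add_le (σ (c : K)) (σ ((α - c : NumberField.RingOfIntegers K) : K))
    have h5 := norm_sub_le_norm_add (σ (c : K)) (σ ((α - c : NumberField.RingOfIntegers K) : K))
    rw [← h1, h2] at h4 h5
    push_cast
    constructor <;> nlinarith
  have hN : ((Ideal.absNorm (Ideal.span {α}) : ℕ) : ℝ) = ∏ σ : K →ₐ[ℚ] ℂ, ‖σ (α : K)‖ := by
    rw [Ideal.absNorm_span_singleton, ← norm_prod, ← Algebra.norm_eq_prod_embeddings ℚ ℂ,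
      ← Algebra.coe_norm_int, Nat.cast_natAbs]
    simp
  constructor
  · have : (n : ℝ) ^ Fintype.card ι ≤ (Ideal.absNorm (Ideal.span {α}) : ℕ) := by
      rw [hN, hcard, ← Finset.card_univ, ← Finset.prod_const]
      exact Finset.prod_le_prod (fun _ _ => by positivity) fun σ _ => (hσ σ).1
    exact_mod_cast this
  · have : ((Ideal.absNorm (Ideal.span {α}) : ℕ) : ℝ) ≤ (((2 * ⌈B⌉₊ + 1 : ℕ) : ℝ) * n) ^ Fintype.card ι := by
      rw [hN, hcard, ← Finset.card_univ, ← Finset.prod_const]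
      exact Finset.prod_le_prod (fun _ _ => by positivity) fun σ _ => (hσ σ).2
    exact_mod_cast this

open Classical in
theorem count_bound (K : Type) [Field K] [NumberField K] {ι : Type} [Fintype ι] [Nonempty ι]
    (b : Module.Basis ι ℤ (NumberField.RingOfIntegers K)) (D : ℕ) :
    ∃ C : ℝ, 0 ≤ C ∧ ∀ (n : ℕ) (I : Ideal (NumberField.RingOfIntegers K)) (c : NumberField.RingOfIntegers K),
      1 ≤ n → Ideal.absNorm I ≠ 0 → Ideal.absNorm I ≤ (D * n) ^ Fintype.card ι →
      |(Ideal.absNorm I : ℝ) * ((MBox b c n).filter (· ∈ I)).card - (2 * n + 1) ^ Fintype.card ι| ≤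
        C * (n : ℝ) ^ (Fintype.card ι - 1) * (Ideal.absNorm I : ℝ) ^ ((1 : ℝ) / Fintype.card ι) := by
  obtain ⟨M, hM1, hM⟩ := exists_cover b
  set d := Fintype.card ι with hd
  have hd0 : 0 < d := Fintype.card_pos
  refine ⟨2 * M * d * (2 * M * D + 3) ^ (d - 1) + 3 * M * 3 ^ (d - 1), by positivity,
    fun n I c hn hI hID => ?_⟩
  set q := Ideal.absNorm I with hq
  set m := ⌊(q:ℝ) ^ ((1:ℝ) / d)⌋₊ with hm
  set ρ := (q:ℝ) ^ ((1:ℝ) / d) with hρ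
  have hρ0 : 0 ≤ ρ := by positivity
  have hq1 : (1:ℝ) ≤ q := by exact_mod_cast Nat.one_le_iff_ne_zero.mpr hI
  have hρd : ρ ^ d = q := by
    rw [hρ, one_div, Real.rpow_inv_natCast_pow (by positivity) hd0.ne']
  have hmρ : (m:ℝ) ≤ ρ := Nat.floor_le hρ0
  have hρm : ρ < m + 1 := Nat.lt_floor_add_one _
  have hρD : ρ ≤ D * n := by
    refine le_of_pow_le_pow_left₀ hd0.ne' (by positivity) ?_
    rw [hρd]; exact_mod_cast hID
  have hqm : q < (m + 1) ^ d := by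
    have : (q:ℝ) < (m + 1) ^ d := by
      rw [← hρd]; exact pow_lt_pow_left₀ hρm hρ0 hd0.ne'
    exact_mod_cast this
  have hcov := hM I m hI hqm
  have hn1 : (1:ℝ) ≤ n := by exact_mod_cast hn
  have hM1' : (1:ℝ) ≤ M := by exact_mod_cast hM1
  set r : ℕ := M * m with hr
  have hrρ : (r:ℝ) ≤ M * ρ := by rw [hr]; push_cast; gcongr
  have hrD : (r:ℝ) ≤ M * D * n := hrρ.trans (by rw [mul_assoc]; gcongr)
  have hup := tile_upper b I hI r hcov c n
  rw [← hq, ← hd] at hup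
  set k := ((MBox b c n).filter (· ∈ I)).card with hk
  have hup' : (q:ℝ) * k ≤ (2 * (n + r) + 1) ^ d := by exact_mod_cast hup
  have e1 : (2 * (n + r) + 1 : ℝ) ^ d - (2 * n + 1) ^ d ≤ 
      2 * M * d * (2 * M * D + 3) ^ (d - 1) * n ^ (d - 1) * ρ := by
    refine (le_abs_self _).trans ((abs_pow_sub_pow_le _ _ _).trans ?_)
    have h1 : |(2 * (n + r) + 1 : ℝ) - (2 * n + 1)| = 2 * r := by
      rw [abs_of_nonneg] <;> [ring; (ring_nf; positivity)]
    have h2 : max |(2 * (n + r) + 1 : ℝ)| |(2 * n + 1:ℝ)| ≤ (2 * M * D + 3) * n := by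
      rw [abs_of_nonneg (by positivity), abs_of_nonneg (by positivity)]
      apply max_le <;> nlinarith [show (0:ℝ) ≤ M * D * n by positivity]
    rw [h1]
    calc _ ≤ 2 * (M * ρ) * d * ((2 * M * D + 3) * n) ^ (d - 1) := by gcongr
      _ = _ := by rw [mul_pow]; ring
  have p1 : 0 ≤ 3 * M * 3 ^ (d - 1) * (n:ℝ) ^ (d - 1) * ρ := by positivity
  have p2 : 0 ≤ 2 * M * d * (2 * M * D + 3) ^ (d - 1) * (n:ℝ) ^ (d - 1) * ρ := by positivity
  rw [abs_le]
  constructor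
  · suffices (2 * n + 1:ℝ) ^ d - q * k ≤ 2 * M * d * (2 * M * D + 3) ^ (d - 1) * n ^ (d - 1) * ρ 
        + 3 * M * 3 ^ (d - 1) * n ^ (d - 1) * ρ by linarith
    by_cases hrn : r ≤ n
    · obtain ⟨l, rfl⟩ := Nat.exists_eq_add_of_le' hrn
      have hlow := tile_lower b I hI r hcov c l
      rw [← hq, ← hd, ← hk] at hlow
      have hlow' : (2 * l + 1 : ℝ) ^ d ≤ q * k := by exact_mod_cast hlow
      have e2 : (2 * ((l + r : ℕ):ℝ) + 1 : ℝ) ^ d - (2 * l + 1) ^ d ≤ 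
        2 * M * d * (2 * M * D + 3) ^ (d - 1) * ((l + r : ℕ):ℝ) ^ (d - 1) * ρ := by
        refine (le_abs_self _).trans ((abs_pow_sub_pow_le _ _ _).trans ?_)
        have h1 : |(2 * ((l + r : ℕ):ℝ) + 1 : ℝ) - (2 * l + 1)| = 2 * r := by
          push_cast
          rw [abs_of_nonneg] <;> [ring; (ring_nf; positivity)]
        have h2 : max |(2 * ((l + r : ℕ):ℝ) + 1 : ℝ)| |(2 * l + 1:ℝ)| ≤ (2 * M * D + 3) * ((l + r : ℕ):ℝ) := by
          rw [abs_of_nonneg (by positivity), abs_of_nonneg (by positivity)]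
          have : (0:ℝ) ≤ M * D * ((l + r : ℕ):ℝ) := by positivity
          have h3 : (l:ℝ) ≤ ((l + r : ℕ):ℝ) := by push_cast; linarith [Nat.cast_nonneg (α := ℝ) r]
          apply max_le <;> nlinarith 
        rw [h1]
        calc _ ≤ 2 * (M * ρ) * d * ((2 * M * D + 3) * ((l + r : ℕ):ℝ)) ^ (d - 1) := by gcongr
          _ = _ := by rw [mul_pow]; ring
      linarith
    · have hrn' : (n:ℝ) ≤ r := by exact_mod_cast (not_le.mp hrn).le
      have : (2 * n + 1:ℝ) ^ d ≤ 3 * M * 3 ^ (d - 1) * n ^ (d - 1) * ρ := by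
        calc (2 * n + 1:ℝ) ^ d = (2 * n + 1) ^ (d - 1) * (2 * n + 1) := by
              rw [← pow_succ, Nat.sub_add_cancel hd0]
          _ ≤ (3 * n) ^ (d - 1) * (3 * (M * ρ)) := by
              gcongr <;> linarith
          _ = _ := by rw [mul_pow]; ring
      have : (0:ℝ) ≤ q * k := by positivity
      linarith
  · linarith

open Classical in
def MPr (K : Type) [Field K] [NumberField K] (N : ℕ) : Finset (Ideal (NumberField.RingOfIntegers K)) :=
  (Ideal.finite_setOfPred_absNorm_le (S := NumberField.RingOfIntegers K) N).toFinset.filter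
    (fun P => P.IsPrime ∧ P ≠ ⊥)

theorem mem_MPr (K : Type) [Field K] [NumberField K] (N : ℕ) (P : Ideal (NumberField.RingOfIntegers K)) :
    P ∈ MPr K N ↔ P.IsPrime ∧ P ≠ ⊥ ∧ Ideal.absNorm P ≤ N := by
  unfold MPr
  simp
  tauto

theorem two_le_of_mem_MPr {K : Type} [Field K] [NumberField K] {N : ℕ}
    {P : Ideal (NumberField.RingOfIntegers K)} (hP : P ∈ MPr K N) : 2 ≤ Ideal.absNorm P := by
  rw [mem_MPr] at hP
  have h0 : Ideal.absNorm P ≠ 0 := by rw [Ne, Ideal.absNorm_eq_zero_iff]; exact hP.2.1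
  have h1 : Ideal.absNorm P ≠ 1 := by rw [Ne, Ideal.absNorm_eq_one_iff]; exact hP.1.ne_top
  omega

def MK (K : Type) [Field K] [NumberField K] (m : ℕ) : ℕ :=
  ((MPr K m).filter (fun P => Ideal.absNorm P = m)).card

theorem sum_MPr (K : Type) [Field K] [NumberField K] (h : ℕ → ℝ) (N : ℕ) :
    ∑ P ∈ MPr K N, h (Ideal.absNorm P) = ∑ i ∈ Finset.range N, (MK K (i + 1) : ℝ) * h (i + 1) := by
  induction N with
  | zero =>
    rw [Finset.range_zero, Finset.sum_empty]
    refine Finset.sum_eq_zero fun P hP => ?_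
    have := two_le_of_mem_MPr hP
    rw [mem_MPr] at hP
    omega
  | succ N ih =>
    rw [Finset.sum_range_succ, ← ih, ← Finset.sum_filter_add_sum_filter_not (MPr K (N + 1))
      (fun P => Ideal.absNorm P = N + 1), add_comm]
    congr 1
    · refine Finset.sum_congr ?_ fun _ _ => rfl
      ext P
      simp only [Finset.mem_filter, mem_MPr]
      constructor
      · rintro ⟨⟨h1, h2, h3⟩, h4⟩
        exact ⟨h1, h2, by omega⟩
      · rintro ⟨h1, h2, h3⟩
        exact ⟨⟨h1, h2, by omega⟩, by omega⟩
    · rw [Finset.sum_congr rfl (g := fun _ => h (N + 1))]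
      · rw [Finset.sum_const, nsmul_eq_mul]; rfl
      · intro P hP
        rw [(Finset.mem_filter.mp hP).2]

theorem cheb_K (K : Type) [Field K] [NumberField K] :
    ∃ C : ℝ, 0 ≤ C ∧ ∀ N : ℕ, ∑ P ∈ MPr K N, Real.log (Ideal.absNorm P) ≤ C * N := by
  refine ⟨Module.finrank ℤ (NumberField.RingOfIntegers K) * Real.log 4, by positivity, fun N => ?_⟩
  have hdvd : ∏ P ∈ MPr K N, P ∣ Ideal.span {((primorial N : ℕ) : NumberField.RingOfIntegers K)} := by
    refine Finset.prod_primes_dvd _ (fun P hP => ?_) (fun P hP => ?_)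
    · rw [mem_MPr] at hP
      exact Ideal.prime_of_isPrime hP.2.1 hP.1
    · have h2 := two_le_of_mem_MPr hP
      rw [mem_MPr] at hP
      obtain ⟨hp, hb, hle⟩ := hP
      rw [Ideal.dvd_span_singleton]
      have hmem := Ideal.absNorm_mem P
      have : (((Ideal.absNorm P).primeFactorsList.map (Nat.cast : ℕ → NumberField.RingOfIntegers K) : 
          Multiset (NumberField.RingOfIntegers K))).prod ∈ P := by
        rw [Multiset.prod_coe, ← Nat.cast_list_prod, Nat.prod_primeFactorsList (by omega)]
        exact hmem
      rw [hp.multiset_prod_mem_iff_exists_mem] at this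
      obtain ⟨x, hx, hxP⟩ := this
      rw [Multiset.mem_coe, List.mem_map] at hx
      obtain ⟨p, hp', rfl⟩ := hx
      have hpp := Nat.prime_of_mem_primeFactorsList hp'
      have hpl := Nat.le_of_mem_primeFactorsList hp'
      have : p ∣ primorial N := by
        refine Finset.dvd_prod_of_mem (fun x => x) ?_
        simp only [Finset.mem_filter, Finset.mem_range]
        exact ⟨by omega, hpp⟩
      obtain ⟨e, he⟩ := this
      rw [he, Nat.cast_mul]
      exact P.mul_mem_right _ hxP
  have h1 := map_dvd Ideal.absNorm hdvd
  rw [Ideal.absNorm_span_natCast, map_prod] at h1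
  have h2 := Nat.le_of_dvd (pow_pos (primorial_pos N) _) h1
  have h3 : ((∏ P ∈ MPr K N, Ideal.absNorm P : ℕ) : ℝ) ≤
      ((4:ℝ) ^ N) ^ Module.finrank ℤ (NumberField.RingOfIntegers K) := by
    exact_mod_cast h2.trans (Nat.pow_le_pow_left (primorial_le_four_pow N) _)
  have hne : ∀ P ∈ MPr K N, ((Ideal.absNorm P : ℕ) : ℝ) ≠ 0 := fun P hP => by
    have := two_le_of_mem_MPr hP
    positivity
  rw [← Real.log_prod hne, ← Nat.cast_prod]
  refine (Real.log_le_log ?_ h3).trans (le_of_eq ?_)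
  · rw [Nat.cast_prod]
    exact Finset.prod_pos fun P hP => lt_of_le_of_ne (by positivity) (hne P hP).symm
  · rw [Real.log_pow, Real.log_pow]; ring

theorem abel_le (c f : ℕ → ℝ) (C : ℝ) (hc : ∀ N : ℕ, ∑ i ∈ Finset.range N, c i ≤ C * N)
    (hf : Antitone f) (hf0 : ∀ i, 0 ≤ f i) (N : ℕ) :
    ∑ i ∈ Finset.range N, c i * f i ≤ C * ∑ i ∈ Finset.range N, f i := by
  have hT : ∀ N : ℕ, ∑ i ∈ Finset.range N, (c i - C) ≤ 0 := by
    intro N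
    rw [Finset.sum_sub_distrib]
    have := hc N
    simp
    linarith
  have key : ∀ N : ℕ, ∑ i ∈ Finset.range N, (c i - C) * f i ≤ (∑ i ∈ Finset.range N, (c i - C)) * f N := by
    intro N
    induction N with
    | zero => simp
    | succ N ih =>
      rw [Finset.sum_range_succ]
      have h1 : (∑ i ∈ Finset.range (N + 1), (c i - C)) * f N ≤ (∑ i ∈ Finset.range (N + 1), (c i - C)) * f (N + 1) :=
        mul_le_mul_of_nonpos_left (hf (Nat.le_succ N)) (hT _)
      have h2 := Finset.sum_range_succ (fun i => c i - C) N
      rw [h2] at h1 ⊢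
      linarith
  have h3 := key N
  have h4 := mul_nonpos_of_nonpos_of_nonneg (hT N) (hf0 N)
  simp only [sub_mul, Finset.sum_sub_distrib] at h3 h4
  rw [Finset.mul_sum]
  linarith

theorem sum_primes_le (K : Type) [Field K] [NumberField K] :
    ∃ C : ℝ, 0 ≤ C ∧ ∀ g : ℕ → ℝ, (∀ i, 0 ≤ g (i + 1)) → Antitone (fun i => g (i + 1)) → ∀ N : ℕ,
      ∑ P ∈ MPr K N, Real.log (Ideal.absNorm P) * g (Ideal.absNorm P) ≤
        C * ∑ i ∈ Finset.range N, g (i + 1) := by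
  obtain ⟨C, hC, h⟩ := cheb_K K
  refine ⟨C, hC, fun g hg0 hg N => ?_⟩
  rw [sum_MPr K (fun m => Real.log m * g m) N]
  have := abel_le (fun i => (MK K (i + 1) : ℝ) * Real.log ((i + 1 : ℕ) : ℝ)) (fun i => g (i + 1)) C
    (fun N => by rw [← sum_MPr K (fun m => Real.log m)]; exact h N) hg hg0 N
  simpa only [mul_assoc] using this

theorem sum_rpow_le (d : ℕ) (hd : 0 < d) (N : ℕ) :
    ∑ i ∈ Finset.range N, (((i + 1 : ℕ) : ℝ)) ^ ((1:ℝ) / d - 1) ≤ d * (N:ℝ) ^ ((1:ℝ) / d) := by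
  have hd' : (0:ℝ) < d := by exact_mod_cast hd
  induction N with
  | zero => simp; positivity
  | succ N ih =>
    rw [Finset.sum_range_succ]
    refine (add_le_add_left ih _).trans ?_
    set s : ℝ := (1:ℝ) / d with hs
    have hs0 : 0 < s := by positivity
    have hs1 : s ≤ 1 := by
      rw [hs, div_le_one hd']; exact_mod_cast hd
    have hN : (0:ℝ) < ((N + 1 : ℕ) : ℝ) := by positivity
    have hb := rpow_one_add_le_one_add_mul_self (s := -1 / ((N + 1 : ℕ) : ℝ)) (p := s) (by
      rw [neg_div, neg_le_neg_iff, div_le_one hN]; push_cast; linarith [Nat.cast_nonneg (α := ℝ) N]) hs0.le hs1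
    have h1 : 1 + -1 / ((N + 1 : ℕ) : ℝ) = N / ((N + 1 : ℕ) : ℝ) := by
      field_simp; push_cast; ring
    rw [h1, Real.div_rpow (by positivity) hN.le, div_le_iff₀ (by positivity)] at hb
    rw [Real.rpow_sub_one hN.ne']
    have hds : (d:ℝ) * s = 1 := by rw [hs]; field_simp
    set T := ((N + 1 : ℕ) : ℝ) ^ s
    have : (d:ℝ) * (N:ℝ) ^ s ≤ d * ((1 + s * (-1 / ((N + 1 : ℕ) : ℝ))) * T) := by gcongr
    have h3 : (d:ℝ) * ((1 + s * (-1 / ((N + 1 : ℕ) : ℝ))) * T) = d * T - (d * s) * (T / ((N + 1 : ℕ) : ℝ)) := by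
      ring
    rw [h3, hds] at this
    linarith

theorem sum_inv_sq_le (N : ℕ) :
    ∑ i ∈ Finset.range N, 1 / (((i + 1 : ℕ) : ℝ)) ^ 2 ≤ 2 := by
  have : ∑ i ∈ Finset.range N, 1 / (((i + 1 : ℕ) : ℝ)) ^ 2 ≤ 2 - 1 / (N:ℝ) := by
    induction N with
    | zero => simp
    | succ N ih =>
      rw [Finset.sum_range_succ]
      rcases Nat.eq_zero_or_pos N with rfl | hN
      · norm_num
      · have hN' : (0:ℝ) < N := by exact_mod_cast hN
        have : 1 / (((N + 1 : ℕ) : ℝ)) ^ 2 ≤ 1 / N - 1 / ((N + 1 : ℕ) : ℝ) := by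
          push_cast
          rw [div_sub_div _ _ hN'.ne' (by positivity), div_le_div_iff₀ (by positivity) (by positivity)]
          nlinarith
        linarith
  have h2 : (0:ℝ) ≤ 1 / N := by positivity
  linarith

open Classical in
theorem log_decomp (K : Type) [Field K] [NumberField K] (X : ℕ) (J : Ideal (NumberField.RingOfIntegers K))
    (hJ : J ≠ ⊥) (hX : Ideal.absNorm J ≤ X) :
    Real.log (Ideal.absNorm J) = ∑ P ∈ MPr K X, ∑ k ∈ Finset.Icc 1 X,
      if J ≤ P ^ k then Real.log (Ideal.absNorm P) else 0 := by
  set F := UniqueFactorizationMonoid.normalizedFactors J with hF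
  have hJ0 : Ideal.absNorm J ≠ 0 := by rwa [Ne, Ideal.absNorm_eq_zero_iff]
  have hcnt : ∀ P ∈ MPr K X, ∀ k, J ≤ P ^ k ↔ k ≤ F.count P := by
    intro P hP k
    rw [mem_MPr] at hP
    have hpr : Prime P := Ideal.prime_of_isPrime hP.2.1 hP.1
    rw [← Ideal.dvd_iff_le, pow_dvd_iff_le_emultiplicity,
      UniqueFactorizationMonoid.emultiplicity_eq_count_normalizedFactors hpr.irreducible hJ,
      normalize_eq]
    exact Nat.cast_le
  have hmem : ∀ P ∈ F, P ∈ MPr K X := by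
    intro P hP
    have hpr := UniqueFactorizationMonoid.prime_of_normalized_factor P hP
    have hdv := UniqueFactorizationMonoid.dvd_of_mem_normalizedFactors hP
    rw [mem_MPr]
    refine ⟨Ideal.isPrime_of_prime hpr, hpr.ne_zero, ?_⟩
    exact (Nat.le_of_dvd (Nat.pos_of_ne_zero hJ0) (map_dvd Ideal.absNorm hdv)).trans hX
  have h1 : Ideal.absNorm J = ∏ P ∈ MPr K X, Ideal.absNorm P ^ F.count P := by
    conv_lhs => rw [← Ideal.prod_normalizedFactors_eq_self hJ]
    rw [map_multiset_prod, Finset.prod_multiset_map_count]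
    refine Finset.prod_subset (fun P hP => hmem P (Multiset.mem_toFinset.mp hP)) fun P _ hP => ?_
    rw [Multiset.mem_toFinset] at hP
    rw [Multiset.count_eq_zero_of_notMem hP, pow_zero]
  have hlt : ∀ P ∈ MPr K X, F.count P ≤ X := by
    intro P hP
    have h2 := two_le_of_mem_MPr hP
    have h3 : Ideal.absNorm P ^ F.count P ≤ Ideal.absNorm J := by
      rw [← map_pow]
      exact Nat.le_of_dvd (Nat.pos_of_ne_zero hJ0)
        (map_dvd Ideal.absNorm (Ideal.dvd_iff_le.mpr ((hcnt P hP _).mpr le_rfl)))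
    have h4 : F.count P < Ideal.absNorm P ^ F.count P := Nat.lt_pow_self (by omega)
    omega
  conv_lhs => rw [h1]
  rw [Nat.cast_prod, Real.log_prod (fun P hP => by
    have := two_le_of_mem_MPr hP
    positivity)]
  refine Finset.sum_congr rfl fun P hP => ?_
  rw [← Finset.sum_filter, Finset.sum_const, nsmul_eq_mul, Nat.cast_pow, Real.log_pow]
  congr 2
  have : (Finset.Icc 1 X).filter (fun k => J ≤ P ^ k) = Finset.Icc 1 (F.count P) := by
    ext k
    simp only [Finset.mem_filter, Finset.mem_Icc, hcnt P hP]
    have := hlt P hP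
    omega
  rw [this]
  simp

theorem geom_tail (q : ℕ) (hq : 2 ≤ q) (X : ℕ) :
    ∑ k ∈ Finset.Icc 2 X, 1 / (q:ℝ) ^ k ≤ 2 * (1 / (q:ℝ) ^ 2) := by
  have hq' : (2:ℝ) ≤ q := by exact_mod_cast hq
  have hq0 : (0:ℝ) < q := by linarith
  rcases Nat.lt_or_ge X 2 with h | h
  · rw [Finset.Icc_eq_empty (by omega)]; simp
  have : ∑ k ∈ Finset.Icc 2 X, 1 / (q:ℝ) ^ k ≤ 2 * (1 / (q:ℝ) ^ 2) - 1 / (q:ℝ) ^ X := by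
    induction X, h using Nat.le_induction with
    | base => simp; linarith
    | succ X hX ih =>
      rw [Finset.sum_Icc_succ_top (by omega)]
      have : 2 * (1 / (q:ℝ) ^ (X + 1)) ≤ 1 / (q:ℝ) ^ X := by
        rw [pow_succ, mul_one_div, div_le_div_iff₀ (by positivity) (by positivity)]
        nlinarith [pow_pos hq0 X]
      linarith
  have h2 : 0 ≤ 1 / (q:ℝ) ^ X := by positivity
  linarith

theorem mertens_special (K : Type) [Field K] [NumberField K] :
    ∃ (d D : ℕ) (C : ℝ), 0 < d ∧ 0 < D ∧ 0 ≤ C ∧ ∀ n : ℕ, 1 ≤ n →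
      |∑ P ∈ MPr K ((D * n) ^ d), Real.log (Ideal.absNorm P) / (Ideal.absNorm P) - d * Real.log n| ≤ C := by
  classical
  let b := NumberField.RingOfIntegers.basis K
  set ι := Module.Free.ChooseBasisIndex ℤ (NumberField.RingOfIntegers K)
  have : Nonempty ι := b.index_nonempty
  obtain ⟨A, D, hD, hnorm⟩ := norm_bounds K b
  obtain ⟨C1, hC1, hcount⟩ := count_bound K b D
  obtain ⟨C0, hC0, hch⟩ := sum_primes_le K
  set d := Fintype.card ι with hd
  have hd0 : 0 < d := Fintype.card_pos
  have hD1 : (1:ℝ) ≤ D := by exact_mod_cast hD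
  refine ⟨d, D, (1 + C1 * D) * (4 * C0) + C1 * (C0 * (d * D)) + d * Real.log D, hd0, by omega,
    by have := Real.log_nonneg hD1; positivity, fun n hn => ?_⟩
  have hn1 : (1:ℝ) ≤ n := by exact_mod_cast hn
  set X := (D * n) ^ d with hX
  set S := MBox b ((A * n : ℕ) : NumberField.RingOfIntegers K) n with hS
  set Q : ℝ := (2 * n + 1) ^ d with hQ
  have hSQ : (S.card : ℝ) = Q := by rw [hS, card_MBox, hQ]; push_cast; rfl
  have hQ0 : 0 < Q := by positivity
  have hnQ : (n:ℝ) ^ d ≤ Q := by rw [hQ]; gcongr; linarith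
  have hXd : (X:ℝ) ^ ((1:ℝ) / d) = D * n := by
    rw [hX]; push_cast
    rw [one_div, Real.pow_rpow_inv_natCast (by positivity) hd0.ne']
  have hnd : (n:ℝ) ^ (d - 1) * n = n ^ d := by rw [← pow_succ, Nat.sub_add_cancel hd0]
  let a : Ideal (NumberField.RingOfIntegers K) → ℕ := fun I => (S.filter (· ∈ I)).card
  have hN0 : ∀ α ∈ S, Ideal.span {α} ≠ ⊥ := by
    intro α hα h
    have := (hnorm n hn α hα).1
    rw [h, Ideal.absNorm_bot] at this
    have : 0 < n ^ d := by positivity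
    omega
  -- E1
  have E1 : ∑ α ∈ S, Real.log (Ideal.absNorm (Ideal.span {α})) =
      ∑ P ∈ MPr K X, ∑ k ∈ Finset.Icc 1 X, Real.log (Ideal.absNorm P) * a (P ^ k) := by
    rw [Finset.sum_congr rfl fun α hα => log_decomp K X _ (hN0 α hα) (hnorm n hn α hα).2]
    rw [Finset.sum_comm]
    refine Finset.sum_congr rfl fun P _ => ?_
    rw [Finset.sum_comm]
    refine Finset.sum_congr rfl fun k _ => ?_
    rw [← Finset.sum_filter, Finset.sum_const, nsmul_eq_mul, mul_comm]
    simp only [a, Ideal.span_singleton_le_iff_mem]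
  -- E2
  have E2l : Q * (d * Real.log n) ≤ ∑ α ∈ S, Real.log (Ideal.absNorm (Ideal.span {α})) := by
    rw [← hSQ, ← nsmul_eq_mul]
    refine Finset.card_nsmul_le_sum _ _ _ fun α hα => ?_
    rw [← Real.log_pow]
    exact Real.log_le_log (by positivity) (by exact_mod_cast (hnorm n hn α hα).1)
  have E2u : ∑ α ∈ S, Real.log (Ideal.absNorm (Ideal.span {α})) ≤ Q * (d * Real.log n + d * Real.log D) := by
    rw [← hSQ, ← nsmul_eq_mul]
    refine Finset.sum_le_card_nsmul _ _ _ fun α hα => ?_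
    have h1 : (d * Real.log n + d * Real.log D) = Real.log ((D * n : ℝ) ^ d) := by
      rw [Real.log_pow, Real.log_mul (by positivity) (by positivity)]; ring
    rw [h1]
    refine Real.log_le_log ?_ (by exact_mod_cast (hnorm n hn α hα).2)
    have h2 := (hnorm n hn α hα).1
    have h3 : 0 < n ^ d := by positivity
    exact_mod_cast h3.trans_le h2
  -- E3
  have E3 : ∀ I : Ideal (NumberField.RingOfIntegers K), Ideal.absNorm I ≠ 0 →
      (a I : ℝ) ≤ (1 + C1 * D) * Q * (1 / (Ideal.absNorm I : ℝ)) := by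
    intro I hI
    have hI' : (0:ℝ) < Ideal.absNorm I := by exact_mod_cast Nat.pos_of_ne_zero hI
    rcases Nat.eq_zero_or_pos (a I) with h0 | hpos
    · rw [h0]; push_cast; positivity
    obtain ⟨α, hα⟩ := Finset.card_pos.mp hpos
    rw [Finset.mem_filter] at hα
    have hle : Ideal.absNorm I ≤ X := by
      refine le_trans (Nat.le_of_dvd ?_ (Ideal.absNorm_dvd_absNorm_of_le
        ((Ideal.span_singleton_le_iff_mem I).mpr hα.2))) (hnorm n hn α hα.1).2
      refine Nat.pos_of_ne_zero ?_
      rw [Ne, Ideal.absNorm_eq_zero_iff]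
      exact hN0 α hα.1
    have h1 := (abs_le.mp (hcount n I ((A * n : ℕ) : NumberField.RingOfIntegers K) hn hI hle)).2
    have h2 : (Ideal.absNorm I : ℝ) ^ ((1:ℝ) / d) ≤ D * n := by
      rw [← hXd]
      exact Real.rpow_le_rpow (by positivity) (by exact_mod_cast hle) (by positivity)
    have h3 : C1 * (n:ℝ) ^ (d - 1) * (Ideal.absNorm I : ℝ) ^ ((1:ℝ) / d) ≤ C1 * D * Q := by
      calc _ ≤ C1 * (n:ℝ) ^ (d - 1) * (D * n) := by gcongr
        _ = C1 * D * n ^ d := by rw [← hnd]; ring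
        _ ≤ _ := by gcongr
    rw [mul_one_div, le_div_iff₀ hI']
    have h4 : (Ideal.absNorm I : ℝ) * a I - Q ≤ C1 * D * Q := h1.trans h3
    linarith
  have hlog : ∀ P ∈ MPr K X, 0 ≤ Real.log (Ideal.absNorm P) := fun P hP => Real.log_natCast_nonneg _
  have hX1 : 1 ≤ X := by
    have : 0 < X := by positivity
    omega
  -- split
  have Esplit : ∑ P ∈ MPr K X, ∑ k ∈ Finset.Icc 1 X, Real.log (Ideal.absNorm P) * a (P ^ k) =
      ∑ P ∈ MPr K X, Real.log (Ideal.absNorm P) * a P +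
      ∑ P ∈ MPr K X, ∑ k ∈ Finset.Icc 2 X, Real.log (Ideal.absNorm P) * a (P ^ k) := by
    rw [← Finset.sum_add_distrib]
    refine Finset.sum_congr rfl fun P _ => ?_
    rw [← Finset.add_sum_Ioc_eq_sum_Icc hX1, pow_one]
    rfl
  -- E4
  have E4 : ∑ P ∈ MPr K X, ∑ k ∈ Finset.Icc 2 X, Real.log (Ideal.absNorm P) * a (P ^ k) ≤
      (1 + C1 * D) * (4 * C0) * Q := by
    calc _ ≤ ∑ P ∈ MPr K X, (1 + C1 * D) * Q * 2 * (Real.log (Ideal.absNorm P) * (1 / (Ideal.absNorm P : ℝ) ^ 2)) := by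
          refine Finset.sum_le_sum fun P hP => ?_
          have h2 := two_le_of_mem_MPr hP
          have h3 := geom_tail _ h2 X
          rw [← Finset.mul_sum]
          calc _ ≤ Real.log (Ideal.absNorm P) * ∑ k ∈ Finset.Icc 2 X, (1 + C1 * D) * Q * (1 / (Ideal.absNorm P : ℝ) ^ k) := by
                refine mul_le_mul_of_nonneg_left (Finset.sum_le_sum fun k _ => ?_) (hlog P hP)
                have := E3 (P ^ k) (by rw [map_pow]; positivity)
                rw [map_pow] at this
                exact_mod_cast this
            _ ≤ Real.log (Ideal.absNorm P) * ((1 + C1 * D) * Q * (2 * (1 / (Ideal.absNorm P : ℝ) ^ 2))) := by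
                rw [← Finset.mul_sum]
                have := hlog P hP
                gcongr
            _ = _ := by ring
      _ = (1 + C1 * D) * Q * 2 * ∑ P ∈ MPr K X, Real.log (Ideal.absNorm P) * (1 / (Ideal.absNorm P : ℝ) ^ 2) := by
          rw [Finset.mul_sum]
      _ ≤ (1 + C1 * D) * Q * 2 * (C0 * 2) := by
          have h1 := hch (fun m => 1 / (m:ℝ) ^ 2) (fun _ => by positivity) (by
            intro i j hij
            show 1 / ((j + 1 : ℕ) : ℝ) ^ 2 ≤ 1 / ((i + 1 : ℕ) : ℝ) ^ 2
            gcongr) X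
          have h2 := sum_inv_sq_le X
          gcongr
          exact h1.trans (by gcongr)
      _ = _ := by ring
  -- E5
  have E5 : |∑ P ∈ MPr K X, Real.log (Ideal.absNorm P) * a P -
      Q * ∑ P ∈ MPr K X, Real.log (Ideal.absNorm P) / (Ideal.absNorm P)| ≤ C1 * (C0 * (d * D)) * Q := by
    rw [Finset.mul_sum, ← Finset.sum_sub_distrib]
    calc _ ≤ ∑ P ∈ MPr K X, C1 * (n:ℝ) ^ (d - 1) * (Real.log (Ideal.absNorm P) * (Ideal.absNorm P : ℝ) ^ ((1:ℝ) / d - 1)) := by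
          refine (Finset.abs_sum_le_sum_abs _ _).trans (Finset.sum_le_sum fun P hP => ?_)
          have h2 := two_le_of_mem_MPr hP
          have hq : (0:ℝ) < Ideal.absNorm P := by positivity
          have hle := ((mem_MPr _ _ _).mp hP).2.2
          have h1 := hcount n P ((A * n : ℕ) : NumberField.RingOfIntegers K) hn (by omega) hle
          have h3 : Real.log (Ideal.absNorm P) * a P - Q * (Real.log (Ideal.absNorm P) / (Ideal.absNorm P))
            = (Real.log (Ideal.absNorm P) / (Ideal.absNorm P)) * ((Ideal.absNorm P : ℝ) * a P - Q) := by
            field_simp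
          rw [h3, abs_mul, abs_of_nonneg (div_nonneg (hlog P hP) hq.le)]
          refine (mul_le_mul_of_nonneg_left h1 (div_nonneg (hlog P hP) hq.le)).trans (le_of_eq ?_)
          rw [Real.rpow_sub_one hq.ne']
          field_simp
      _ = C1 * (n:ℝ) ^ (d - 1) * ∑ P ∈ MPr K X, (Real.log (Ideal.absNorm P) * (Ideal.absNorm P : ℝ) ^ ((1:ℝ) / d - 1)) := by
          rw [Finset.mul_sum]
      _ ≤ C1 * (n:ℝ) ^ (d - 1) * (C0 * (d * (D * n))) := by
          have h1 := hch (fun m => (m:ℝ) ^ ((1:ℝ) / d - 1)) (fun _ => by positivity) (by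
            intro i j hij
            show ((j + 1 : ℕ) : ℝ) ^ ((1:ℝ) / d - 1) ≤ ((i + 1 : ℕ) : ℝ) ^ ((1:ℝ) / d - 1)
            refine Real.rpow_le_rpow_of_nonpos (by positivity) (by exact_mod_cast Nat.succ_le_succ hij) ?_
            rw [sub_nonpos, div_le_one (by exact_mod_cast hd0)]
            exact_mod_cast hd0) X
          have h2 := sum_rpow_le d hd0 X
          rw [hXd] at h2
          gcongr
          exact h1.trans (by gcongr)
      _ = C1 * (C0 * (d * D)) * n ^ d := by rw [← hnd]; ring
      _ ≤ _ := by gcongr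
  have E4' : 0 ≤ ∑ P ∈ MPr K X, ∑ k ∈ Finset.Icc 2 X, Real.log (Ideal.absNorm P) * a (P ^ k) :=
    Finset.sum_nonneg fun P hP => Finset.sum_nonneg fun k _ => mul_nonneg (hlog P hP) (by positivity)
  set L := ∑ P ∈ MPr K X, Real.log (Ideal.absNorm P) / (Ideal.absNorm P : ℝ) with hL
  rw [abs_le] at E5 ⊢
  rw [E1, Esplit] at E2l E2u
  have hlD := Real.log_nonneg hD1
  have u1 : 0 ≤ (1 + C1 * D) * (4 * C0) * Q := by positivity
  have u2 : 0 ≤ d * Real.log D * Q := by positivity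
  constructor
  · refine le_of_mul_le_mul_left ?_ hQ0
    linarith [E5.1]
  · refine le_of_mul_le_mul_left ?_ hQ0
    linarith [E5.1]

theorem MPr_mono (K : Type) [Field K] [NumberField K] {M N : ℕ} (h : M ≤ N) : MPr K M ⊆ MPr K N := by
  intro P hP
  rw [mem_MPr] at hP ⊢
  exact ⟨hP.1, hP.2.1, hP.2.2.trans h⟩

theorem mertens_first (K : Type) [Field K] [NumberField K] :
    ∃ C : ℝ, 0 ≤ C ∧ ∀ N : ℕ, 1 ≤ N →
      |∑ P ∈ MPr K N, Real.log (Ideal.absNorm P) / (Ideal.absNorm P) - Real.log N| ≤ C := by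
  obtain ⟨d, D, C, hd, hD, hC, h⟩ := mertens_special K
  have hD1 : (1:ℝ) ≤ D := by exact_mod_cast hD
  have hlD := Real.log_nonneg hD1
  have hl2 : 0 ≤ Real.log 2 := Real.log_nonneg (by norm_num)
  refine ⟨C + d * Real.log 2 + d * Real.log D, by positivity, fun N hN => ?_⟩
  have hN1 : (1:ℝ) ≤ N := by exact_mod_cast hN
  have hmono : ∀ M M' : ℕ, M ≤ M' → ∑ P ∈ MPr K M, Real.log (Ideal.absNorm P) / (Ideal.absNorm P) ≤
      ∑ P ∈ MPr K M', Real.log (Ideal.absNorm P) / (Ideal.absNorm P) := fun M M' hM =>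
    Finset.sum_le_sum_of_subset_of_nonneg (MPr_mono K hM)
      fun P _ _ => div_nonneg (Real.log_natCast_nonneg _) (by positivity)
  set ρ := (N:ℝ) ^ ((1:ℝ) / d) with hρ
  have hρ1 : 1 ≤ ρ := Real.one_le_rpow hN1 (by positivity)
  have hρd : ρ ^ d = N := by
    rw [hρ, one_div, Real.rpow_inv_natCast_pow (by positivity) hd.ne']
  have hlog : Real.log N = d * Real.log ρ := by rw [← hρd, Real.log_pow]
  have u1 : 0 ≤ d * Real.log D := by positivity
  have u2 : 0 ≤ d * Real.log 2 := by positivity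
  rw [abs_le]
  constructor
  · by_cases hc : (D:ℝ) ≤ ρ
    · set n := ⌊ρ / D⌋₊ with hn
      have hq1 : 1 ≤ ρ / D := by rw [le_div_iff₀ (by positivity)]; linarith
      have hn1 : 1 ≤ n := Nat.le_floor (by exact_mod_cast hq1)
      have hnl : (n:ℝ) ≤ ρ / D := Nat.floor_le (by positivity)
      have hnu : ρ / D < n + 1 := Nat.lt_floor_add_one _
      have hn1' : (1:ℝ) ≤ n := by exact_mod_cast hn1
      have hle : (D * n) ^ d ≤ N := by
        have : ((D * n : ℝ)) ^ d ≤ N := by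
          rw [← hρd]
          gcongr
          rw [le_div_iff₀ (by positivity)] at hnl
          linarith
        exact_mod_cast this
      have h1 := (abs_le.mp (h n hn1)).1
      have h2 := hmono _ _ hle
      have h3 : Real.log ρ ≤ Real.log n + Real.log 2 + Real.log D := by
        rw [← Real.log_mul (by positivity) (by norm_num), ← Real.log_mul (by positivity) (by positivity)]
        refine Real.log_le_log (by positivity) ?_
        rw [← div_le_iff₀ (by positivity)]
        linarith
      have h4 : (d:ℝ) * Real.log ρ ≤ d * (Real.log n + Real.log 2 + Real.log D) := by gcongr
      linarith
    · have h3 : (d:ℝ) * Real.log ρ ≤ d * Real.log D := by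
        gcongr
        exact (not_le.mp hc).le
      have h2 : 0 ≤ ∑ P ∈ MPr K N, Real.log (Ideal.absNorm P) / (Ideal.absNorm P) :=
        Finset.sum_nonneg fun P _ => div_nonneg (Real.log_natCast_nonneg _) (by positivity)
      linarith
  · set n := ⌈ρ⌉₊ with hn
    have hn1 : 1 ≤ n := Nat.one_le_ceil_iff.mpr (by positivity)
    have hnl : ρ ≤ n := Nat.le_ceil _
    have hnu : (n:ℝ) < ρ + 1 := Nat.ceil_lt_add_one (by positivity)
    have hn1' : (1:ℝ) ≤ n := by exact_mod_cast hn1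
    have hle : N ≤ (D * n) ^ d := by
      have : (N:ℝ) ≤ (D * n) ^ d := by
        rw [← hρd]
        gcongr
        nlinarith
      exact_mod_cast this
    have h1 := (abs_le.mp (h n hn1)).2
    have h2 := hmono _ _ hle
    have h3 : Real.log n ≤ Real.log ρ + Real.log 2 := by
      rw [← Real.log_mul (by positivity) (by norm_num)]
      exact Real.log_le_log (by positivity) (by linarith)
    have h4 : (d:ℝ) * Real.log n ≤ d * (Real.log ρ + Real.log 2) := by gcongr
    linarith

theorem second_of_first (k : ℕ → ℝ) (C : ℝ) (hC : 0 ≤ C)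
    (h : ∀ N : ℕ, 1 ≤ N → |∑ i ∈ Finset.range N, k (i + 1) * (Real.log ((i + 1 : ℕ) : ℝ) / ((i + 1 : ℕ) : ℝ)) - Real.log N| ≤ C) :
    ∃ A : ℝ, ∀ N : ℕ, 2 ≤ N →
      |∑ i ∈ Finset.range N, k (i + 1) * (1 / ((i + 1 : ℕ) : ℝ)) - Real.log (Real.log N) - A| ≤
        (2 * C + 1) / Real.log N := by
  set L : ℕ → ℝ := fun N => ∑ i ∈ Finset.range N, k (i + 1) * (Real.log ((i + 1 : ℕ) : ℝ) / ((i + 1 : ℕ) : ℝ)) with hL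
  set G : ℕ → ℝ := fun N => ∑ i ∈ Finset.range N, k (i + 1) * (1 / ((i + 1 : ℕ) : ℝ)) with hG
  set u : ℕ → ℝ := fun N => Real.log N with hu
  set r : ℕ → ℝ := fun N => L N - u N with hr
  set H : ℕ → ℝ := fun N => G N - Real.log (u N) - r N / u N with hH
  have hupos : ∀ N, 2 ≤ N → 0 < u N := fun N hN => Real.log_pos (by exact_mod_cast hN)
  have hrC : ∀ N, 2 ≤ N → |r N| ≤ C := fun N hN => h N (by omega)
  have hstep : ∀ N, 2 ≤ N → |H (N + 1) - H N| ≤ (C + 1) * (1 / u N - 1 / u (N + 1)) := by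
    intro N hN
    have hN' : (2:ℝ) ≤ N := by exact_mod_cast hN
    have a := hupos N hN
    have a' := hupos (N + 1) (by omega)
    have huu : u N ≤ u (N + 1) := Real.log_le_log (by positivity) (by push_cast; linarith)
    have hu1 : u (N + 1) - u N ≤ 1 := by
      rw [hu]
      simp only
      rw [← Real.log_div (by positivity) (by positivity)]
      refine (Real.log_le_sub_one_of_pos (by positivity)).trans ?_
      rw [sub_le_iff_le_add, div_le_iff₀ (by positivity)]
      push_cast
      linarith
    have hLG : L (N + 1) - L N = (G (N + 1) - G N) * u (N + 1) := by
      simp only [hL, hG, hu, Finset.sum_range_succ]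
      ring
    have hinv : 0 ≤ 1 / u N - 1 / u (N + 1) := by
      rw [sub_nonneg]; exact one_div_le_one_div_of_le a huu
    have hlog : Real.log (u (N + 1)) - Real.log (u N) = Real.log (u (N + 1) / u N) := by
      rw [Real.log_div a'.ne' a.ne']
    have l1 := Real.log_le_sub_one_of_pos (x := u (N + 1) / u N) (by positivity)
    have l2 := Real.one_sub_inv_le_log_of_pos (x := u (N + 1) / u N) (by positivity)
    rw [← hlog] at l1 l2
    have e1 : (u (N + 1) / u N)⁻¹ = u N / u (N + 1) := inv_div _ _
    rw [e1] at l2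
    have hGd : G (N + 1) - G N = (r (N + 1) - r N) / u (N + 1) + (1 - u N / u (N + 1)) := by
      have : G (N + 1) - G N = (L (N + 1) - L N) / u (N + 1) := by
        rw [hLG]; field_simp
      rw [this]
      simp only [hr]
      field_simp
      ring
    have hHd : H (N + 1) - H N = r N * (1 / u N - 1 / u (N + 1)) -
        (Real.log (u (N + 1)) - Real.log (u N) - (1 - u N / u (N + 1))) := by
      have : H (N + 1) - H N = (G (N + 1) - G N) - (Real.log (u (N + 1)) - Real.log (u N)) 
        - r (N + 1) / u (N + 1) + r N / u N := by simp only [hH]; ring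
      rw [this, hGd]
      ring
    have e2 : (u (N + 1) / u N - 1) - (1 - u N / u (N + 1)) = (u (N + 1) - u N) * (1 / u N - 1 / u (N + 1)) := by
      field_simp
    have e3 : (u (N + 1) - u N) * (1 / u N - 1 / u (N + 1)) ≤ 1 * (1 / u N - 1 / u (N + 1)) := by gcongr
    have e4 : |r N * (1 / u N - 1 / u (N + 1))| ≤ C * (1 / u N - 1 / u (N + 1)) := by
      rw [abs_mul, abs_of_nonneg hinv]
      gcongr
      exact hrC N hN
    rw [hHd]
    rw [abs_le] at e4 ⊢
    constructor <;> linarith [e4.1, e4.2]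
  have htail : ∀ N M, 2 ≤ N → N ≤ M → |H M - H N| ≤ (C + 1) * (1 / u N - 1 / u M) := by
    intro N M hN hM
    induction M, hM using Nat.le_induction with
    | base => simp
    | succ M hM ih =>
      have := hstep M (by omega)
      have h2 := abs_add_le (H (M + 1) - H M) (H M - H N)
      have h3 : H (M + 1) - H M + (H M - H N) = H (M + 1) - H N := by ring
      rw [h3] at h2
      linarith
  have htail' : ∀ N M, 2 ≤ N → N ≤ M → |H M - H N| ≤ (C + 1) / u N := by
    intro N M hN hM
    refine (htail N M hN hM).trans ?_
    have := hupos M (by omega)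
    have h2 : 0 ≤ (C + 1) * (1 / u M) := by positivity
    rw [mul_sub, mul_one_div]
    linarith
  have hto : Tendsto (fun n : ℕ => 2 * ((C + 1) / u (n + 2))) atTop (𝓝 0) := by
    have h1 : Tendsto (fun n : ℕ => u (n + 2)) atTop atTop :=
      (Real.tendsto_log_atTop.comp tendsto_natCast_atTop_atTop).comp (tendsto_add_atTop_nat 2)
    have := (h1.const_div_atTop (C + 1)).const_mul 2
    simpa using this
  have hcs : CauchySeq (fun n : ℕ => H (n + 2)) := by
    refine cauchySeq_of_le_tendsto_0 _ (fun n m N hn hm => ?_) hto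
    rw [Real.dist_eq]
    have h1 := htail' (N + 2) (n + 2) (by omega) (by omega)
    have h2 := htail' (N + 2) (m + 2) (by omega) (by omega)
    rw [abs_le] at h1 h2 ⊢
    constructor <;> linarith [h1.1, h1.2, h2.1, h2.2]
  obtain ⟨A, hA⟩ := cauchySeq_tendsto_of_complete hcs
  refine ⟨A, fun N hN => ?_⟩
  have hAN : |A - H N| ≤ (C + 1) / u N := by
    refine le_of_tendsto ((hA.sub_const (H N)).abs) ?_
    filter_upwards [eventually_ge_atTop N] with n hn
    exact htail' N (n + 2) hN (by omega)
  have a := hupos N hN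
  have e4 : |r N / u N| ≤ C / u N := by
    rw [abs_div, abs_of_pos a]
    gcongr
    exact hrC N hN
  have e5 : G N - Real.log (u N) - A = r N / u N - (A - H N) := by simp only [hH]; ring
  show |G N - Real.log (u N) - A| ≤ (2 * C + 1) / u N
  rw [e5]
  refine (abs_sub _ _).trans ?_
  have : (2 * C + 1) / u N = C / u N + (C + 1) / u N := by ring
  linarith

theorem mertens_nat (K : Type) [Field K] [NumberField K] :
    ∃ A C : ℝ, 0 ≤ C ∧ ∀ N : ℕ, 2 ≤ N →
      |∑ P ∈ MPr K N, 1 / (Ideal.absNorm P : ℝ) - Real.log (Real.log N) - A| ≤ C / Real.log N := by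
  obtain ⟨C, hC, h⟩ := mertens_first K
  obtain ⟨A, hA⟩ := second_of_first (fun m => (MK K m : ℝ)) C hC (fun N hN => by
    have := h N hN
    rwa [sum_MPr K (fun m => Real.log m / m) N] at this)
  refine ⟨A, 2 * C + 1, by positivity, fun N hN => ?_⟩
  rw [sum_MPr K (fun m => 1 / (m:ℝ)) N]
  exact hA N hN

theorem tsum_eq_MPr (K : Type) [Field K] [NumberField K] (x : ℝ) (hx : 0 ≤ x) :
    (∑' p : {p : Ideal (NumberField.RingOfIntegers K) //
          p.IsPrime ∧ (Ideal.absNorm p : ℝ) ≤ x},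
        1 / (Ideal.absNorm p.1 : ℝ)) = ∑ P ∈ MPr K ⌊x⌋₊, 1 / (Ideal.absNorm P : ℝ) := by
  classical
  rw [tsum_eq_sum (s := (MPr K ⌊x⌋₊).subtype _)]
  · rw [Finset.sum_subtype_eq_sum_filter (f := fun P : Ideal (NumberField.RingOfIntegers K) => 1 / (Ideal.absNorm P : ℝ)),
      Finset.filter_true_of_mem]
    intro P hP
    rw [mem_MPr] at hP
    exact ⟨hP.1, (Nat.le_floor_iff hx).mp hP.2.2⟩
  · rintro ⟨P, hP1, hP2⟩ hP
    rw [Finset.mem_subtype, mem_MPr] at hP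
    have : P = ⊥ := by
      by_contra hb
      exact hP ⟨hP1, hb, Nat.le_floor hP2⟩
    simp [this]

/-- **Mertens' theorem for number fields**: there is a constant `A = A(K)` with
`Σ_{N(p) ≤ x} 1/N(p) = log log x + A + O(1/log x)`. -/
theorem mertens_numberField
    (K : Type) [Field K] [NumberField K] :
    ∃ A C : ℝ, ∀ x : ℝ, 3 ≤ x →
      |(∑' p : {p : Ideal (NumberField.RingOfIntegers K) //
          p.IsPrime ∧ (Ideal.absNorm p : ℝ) ≤ x},
        1 / (Ideal.absNorm p.1 : ℝ)) - (Real.log (Real.log x) + A)| ≤ C / Real.log x := by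
  obtain ⟨A, C, hC, h⟩ := mertens_nat K
  refine ⟨A, 2 * (C + 1), fun x hx => ?_⟩
  rw [tsum_eq_MPr K x (by linarith)]
  set N := ⌊x⌋₊ with hN
  have hN3 : 3 ≤ N := Nat.le_floor (by exact_mod_cast hx)
  have hN3' : (3:ℝ) ≤ N := by exact_mod_cast hN3
  have hNx : (N:ℝ) ≤ x := Nat.floor_le (by linarith)
  have hxN : x < N + 1 := Nat.lt_floor_add_one _
  have h1 := h N (by omega)
  have hlN : 0 < Real.log N := Real.log_pos (by linarith)
  have hlx : 0 < Real.log x := Real.log_pos (by linarith)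
  have hle : Real.log N ≤ Real.log x := Real.log_le_log (by linarith) hNx
  have hd1 : Real.log x - Real.log N ≤ 1 := by
    rw [← Real.log_div (by positivity) (by positivity)]
    refine (Real.log_le_sub_one_of_pos (by positivity)).trans ?_
    rw [sub_le_iff_le_add, div_le_iff₀ (by positivity)]
    linarith
  have h2 : Real.log x ≤ 2 * Real.log N := by
    have : 2 * Real.log N = Real.log ((N:ℝ) ^ 2) := by rw [Real.log_pow]; norm_num
    rw [this]
    exact Real.log_le_log (by linarith) (by nlinarith)
  have l0 : Real.log (Real.log N) ≤ Real.log (Real.log x) := Real.log_le_log hlN hle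
  have l1 : Real.log (Real.log x) - Real.log (Real.log N) ≤ 1 / Real.log N := by
    rw [← Real.log_div hlx.ne' hlN.ne']
    refine (Real.log_le_sub_one_of_pos (by positivity)).trans ?_
    rw [div_sub_one hlN.ne']
    gcongr
  have l2 : (C + 1) / Real.log N ≤ 2 * (C + 1) / Real.log x := by
    rw [div_le_div_iff₀ hlN hlx]
    nlinarith
  have l3 : (C + 1) / Real.log N = C / Real.log N + 1 / Real.log N := by ring
  rw [abs_le] at h1 ⊢
  constructor <;> linarith [h1.1, h1.2]

end
end
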